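/- arXiv:1902.05051 — 5 statements merged into one kernel-verified Lean document; each statement's English description precedes it below -/
import Mathlib

section
/- (Similarity-variables transformation of the wave equation) Fix a real p > 1, x₀ ∈ ℝ and T₀ > 0, and let u be a C² function on the backward light cone {(x,t) : t < T₀, |x−x₀| < T₀ − t} solving the semilinear wave equation ∂²_t u = ∂²_x u + |u|^{p−1}u there. Define w(y,s) = (T₀−t)^{2/(p−1)} u(x,t) with y = (x−x₀)/(T₀−t) and s = −log(T₀−t). Then for all y ∈ (−1,1) and all s > −log T₀, w satisfies ∂²_s w = (1/ρ) ∂_y ( ρ (1−y²) ∂_y w ) − (2(p+1)/(p−1)²) w + |w|^{p−1} w − ((p+3)/(p−1)) ∂_s w − 2y ∂²_{y,s} w. -/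
/-!
The identity is a chain-rule computation. Put `a = 2 / (p - 1)`, `E = exp (-s)` and
`w = E ^ a * u (x₀ + y E, T₀ - E)`. Then, with the derivatives of `u` evaluated at that point,

* `∂_y w = E ^ a * E * u_x`,
* `∂_s w = -a w + E ^ a * E * (u_t - y u_x)`,

and a second differentiation, together with `u_xt = u_tx`, expresses every second derivative of `w`
through `u_xx`, `u_xt`, `u_tt`. Moreover `ρ (1 - y²) = (1 - y²) ^ (a + 1)`, so the weighted
divergence term equals `(1 - y²) ∂_y² w - 2 (a + 1) y ∂_y w`, and `a (p - 1) = 2` makes the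
nonlinearity scale as `|w| ^ (p - 1) w = E ^ a * E ^ 2 * |u| ^ (p - 1) u`. After inserting the wave
equation the two sides agree as polynomials.

`cone_partials` packages the `C²` hypothesis as chain rules along arbitrary differentiable curves;
the rest is one-variable calculus.
-/

noncomputable def rho (p y : ℝ) : ℝ := (1 - y ^ 2) ^ ((2 : ℝ) / (p - 1))

/-- On an open planar set a `C²` function has partial derivatives `A = u_x`, `B = u_t`,
`P = u_xx`, `Q = u_xt = u_tx`, `R = u_tt`, expressed here as chain rules along differentiable
curves `z ↦ (f z, g z)`. -/
lemma cone_partials (u : ℝ → ℝ → ℝ) (Ω : Set (ℝ × ℝ)) (hΩ : IsOpen Ω)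
    (hu : ContDiffOn ℝ 2 (fun q : ℝ × ℝ => u q.1 q.2) Ω) :
    ∃ A B P Q R : ℝ → ℝ → ℝ, ∀ (f g : ℝ → ℝ) (f' g' z : ℝ), (f z, g z) ∈ Ω →
      HasDerivAt f f' z → HasDerivAt g g' z →
      HasDerivAt (fun z => u (f z) (g z)) (A (f z) (g z) * f' + B (f z) (g z) * g') z ∧
      HasDerivAt (fun z => A (f z) (g z)) (P (f z) (g z) * f' + Q (f z) (g z) * g') z ∧
      HasDerivAt (fun z => B (f z) (g z)) (Q (f z) (g z) * f' + R (f z) (g z) * g') z := by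
  set F : ℝ × ℝ → ℝ := fun q => u q.1 q.2 with hF
  refine ⟨fun x t => fderiv ℝ F (x, t) (1, 0), fun x t => fderiv ℝ F (x, t) (0, 1),
    fun x t => fderiv ℝ (fderiv ℝ F) (x, t) (1, 0) (1, 0),
    fun x t => fderiv ℝ (fderiv ℝ F) (x, t) (1, 0) (0, 1),
    fun x t => fderiv ℝ (fderiv ℝ F) (x, t) (0, 1) (0, 1), ?_⟩
  intro f g f' g' z hz hf hg
  have hc : ContDiffAt ℝ 2 F (f z, g z) := hu.contDiffAt (hΩ.mem_nhds hz)
  have hsymm : IsSymmSndFDerivAt ℝ F (f z, g z) := hc.isSymmSndFDerivAt (by simp)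
  have h1 : HasFDerivAt F (fderiv ℝ F (f z, g z)) (f z, g z) :=
    (hc.differentiableAt (by norm_num)).hasFDerivAt
  have h2 : HasFDerivAt (fderiv ℝ F) (fderiv ℝ (fderiv ℝ F) (f z, g z)) (f z, g z) :=
    ((hc.fderiv_right (m := 1) (by norm_num)).differentiableAt (by norm_num)).hasFDerivAt
  have hcurve : HasDerivAt (fun z => (f z, g z)) (f', g') z := hf.prodMk hg
  have hdec : ((f', g') : ℝ × ℝ) = f' • ((1, 0) : ℝ × ℝ) + g' • ((0, 1) : ℝ × ℝ) := by simp
  have k1 := h1.comp_hasDerivAt z hcurve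
  have k2 := h2.comp_hasDerivAt z hcurve
  have kA := k2.clm_apply (hasDerivAt_const z ((1, 0) : ℝ × ℝ))
  have kB := k2.clm_apply (hasDerivAt_const z ((0, 1) : ℝ × ℝ))
  have hs : fderiv ℝ (fderiv ℝ F) (f z, g z) (0, 1) (1, 0)
      = fderiv ℝ (fderiv ℝ F) (f z, g z) (1, 0) (0, 1) := hsymm.eq _ _
  refine ⟨?_, ?_, ?_⟩
  · refine k1.congr_deriv ?_
    rw [hdec, map_add, map_smul, map_smul]
    simp only [smul_eq_mul]
    ring
  · refine kA.congr_deriv ?_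
    rw [hdec, map_add, map_smul, map_smul]
    simp only [smul_eq_mul, map_zero, add_zero, add_apply, smul_apply, hs]
    ring
  · refine kB.congr_deriv ?_
    rw [hdec, map_add, map_smul, map_smul]
    simp only [smul_eq_mul, map_zero, add_zero, add_apply, smul_apply]
    ring

/-- The flux coefficient `ρ (1 - y²) = (1 - y²) ^ (a + 1)` has derivative `-2 (a + 1) y ρ`. -/
lemma hasDerivAt_rho_mul (p y : ℝ) (hy : 0 < 1 - y ^ 2) :
    HasDerivAt (fun y => rho p y * (1 - y ^ 2)) (-(2 * (2 / (p - 1) + 1) * y * rho p y)) y := by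
  have h0 : HasDerivAt (fun y : ℝ => 1 - y ^ 2) (-(2 * y)) y := by
    simpa using (hasDerivAt_pow 2 y).const_sub 1
  have h1 := (h0.rpow_const (p := 2 / (p - 1)) (Or.inl hy.ne')).mul h0
  refine h1.congr_deriv ?_
  have h2 : (1 - y ^ 2) ^ ((2 : ℝ) / (p - 1) - 1) * (1 - y ^ 2)
      = (1 - y ^ 2) ^ ((2 : ℝ) / (p - 1)) := by
    rw [Real.rpow_sub_one hy.ne', div_mul_cancel₀ _ hy.ne']
  unfold rho
  linear_combination (-(2 * y) * (2 / (p - 1))) * h2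

theorem stmt11 (p x₀ T₀ : ℝ) (hp : 1 < p) (hT₀ : 0 < T₀)
    (u : ℝ → ℝ → ℝ)
    (hu : ContDiffOn ℝ 2 (fun q : ℝ × ℝ => u q.1 q.2)
      {q : ℝ × ℝ | q.2 < T₀ ∧ |q.1 - x₀| < T₀ - q.2})
    (hpde : ∀ x t : ℝ, t < T₀ → |x - x₀| < T₀ - t →
      deriv (fun t' => deriv (fun t'' => u x t'') t') t =
        deriv (fun x' => deriv (fun x'' => u x'' t) x') x + |u x t| ^ (p - 1) * u x t)
    (w : ℝ → ℝ → ℝ)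
    (hw : ∀ y s : ℝ, w y s =
      (Real.exp (-s)) ^ ((2 : ℝ) / (p - 1))
        * u (x₀ + y * Real.exp (-s)) (T₀ - Real.exp (-s))) :
    ∀ y ∈ Set.Ioo (-1 : ℝ) 1, ∀ s : ℝ, -Real.log T₀ < s →
      deriv (fun s' => deriv (w y) s') s =
        (1 / rho p y)
            * deriv (fun y' => rho p y' * (1 - y' ^ 2)
                * deriv (fun y'' => w y'' s) y') y
          - (2 * (p + 1) / (p - 1) ^ 2) * w y s
          + |w y s| ^ (p - 1) * w y s
          - ((p + 3) / (p - 1)) * deriv (w y) s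
          - 2 * y * deriv (fun y' => deriv (fun s' => w y' s') s) y := by
  have hΩ : IsOpen {q : ℝ × ℝ | q.2 < T₀ ∧ |q.1 - x₀| < T₀ - q.2} :=
    (isOpen_lt continuous_snd continuous_const).and
      (isOpen_lt (continuous_fst.sub continuous_const).abs (continuous_const.sub continuous_snd))
  obtain ⟨A, B, P, Q, R, hD⟩ := cone_partials u _ hΩ hu
  intro y hy s _
  have hp1 : p - 1 ≠ 0 := by linarith
  have hy2 : ∀ z ∈ Set.Ioo (-1 : ℝ) 1, 0 < 1 - z ^ 2 := fun z hz => by nlinarith [hz.1, hz.2]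
  have hmem : ∀ z ∈ Set.Ioo (-1 : ℝ) 1, ∀ r : ℝ,
      (x₀ + z * Real.exp (-r), T₀ - Real.exp (-r)) ∈
        {q : ℝ × ℝ | q.2 < T₀ ∧ |q.1 - x₀| < T₀ - q.2} := by
    intro z hz r
    have he := Real.exp_pos (-r)
    refine ⟨by simpa using he, ?_⟩
    have : |z| < 1 := abs_lt.2 hz
    simp only [add_sub_cancel_left, sub_sub_cancel, abs_mul, abs_of_pos he]
    nlinarith
  -- the wave equation in terms of the partial derivatives
  have hwave : ∀ x t : ℝ, (x, t) ∈ {q : ℝ × ℝ | q.2 < T₀ ∧ |q.1 - x₀| < T₀ - q.2} →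
      R x t = P x t + |u x t| ^ (p - 1) * u x t := by
    intro x t hxt
    have h := hpde x t hxt.1 hxt.2
    have et : (fun t' => deriv (fun t'' => u x t'') t') =ᶠ[nhds t] fun t' => B x t' := by
      have : ∀ᶠ t' in nhds t,
          (x, t') ∈ {q : ℝ × ℝ | q.2 < T₀ ∧ |q.1 - x₀| < T₀ - q.2} :=
        (Continuous.prodMk_right x).continuousAt.eventually_mem (hΩ.mem_nhds hxt)
      filter_upwards [this] with t' ht'
      simpa using
        (hD (fun _ => x) (fun t => t) 0 1 t' ht' (hasDerivAt_const _ _) (hasDerivAt_id' _)).1.deriv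
    have ex : (fun x' => deriv (fun x'' => u x'' t) x') =ᶠ[nhds x] fun x' => A x' t := by
      have : ∀ᶠ x' in nhds x,
          (x', t) ∈ {q : ℝ × ℝ | q.2 < T₀ ∧ |q.1 - x₀| < T₀ - q.2} :=
        (Continuous.prodMk_left t).continuousAt.eventually_mem (hΩ.mem_nhds hxt)
      filter_upwards [this] with x' hx'
      simpa using
        (hD (fun x => x) (fun _ => t) 1 0 x' hx' (hasDerivAt_id' _) (hasDerivAt_const _ _)).1.deriv
    rw [et.deriv_eq, ex.deriv_eq,
      (hD (fun _ => x) (fun t => t) 0 1 t hxt (hasDerivAt_const _ _) (hasDerivAt_id' _)).2.2.deriv,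
      (hD (fun x => x) (fun _ => t) 1 0 x hxt (hasDerivAt_id' _) (hasDerivAt_const _ _)).2.1.deriv]
      at h
    simpa using h
  set a : ℝ := 2 / (p - 1) with ha
  have hexp : ∀ r : ℝ, Real.exp (-r) ^ a = Real.exp (-(a * r)) := fun r => by
    rw [← Real.exp_mul]; congr 1; ring
  have hw' : ∀ z r : ℝ, w z r = Real.exp (-(a * r))
      * u (x₀ + z * Real.exp (-r)) (T₀ - Real.exp (-r)) := fun z r => by rw [hw, hexp]
  have dE : ∀ r : ℝ, HasDerivAt (fun r => Real.exp (-r)) (-Real.exp (-r)) r := fun r => by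
    simpa using (hasDerivAt_neg r).exp
  have dL : ∀ r : ℝ, HasDerivAt (fun r => Real.exp (-(a * r))) (-(a * Real.exp (-(a * r)))) r :=
    fun r => by
      refine ((hasDerivAt_id' r).const_mul a).neg.exp.congr_deriv ?_
      simp only [Pi.neg_apply]
      ring
  have dt : ∀ r : ℝ, HasDerivAt (fun r => T₀ - Real.exp (-r)) (Real.exp (-r)) r := fun r => by
    simpa using (dE r).const_sub T₀
  have dx : ∀ z r : ℝ,
      HasDerivAt (fun r => x₀ + z * Real.exp (-r)) (-(z * Real.exp (-r))) r := fun z r => by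
    simpa using ((dE r).const_mul z).const_add x₀
  have dy : ∀ z r : ℝ,
      HasDerivAt (fun z => x₀ + z * Real.exp (-r)) (Real.exp (-r)) z := fun z r => by
    simpa using ((hasDerivAt_id' z).mul_const (Real.exp (-r))).const_add x₀
  have Ds := fun z hz r => hD (fun r => x₀ + z * Real.exp (-r)) (fun r => T₀ - Real.exp (-r))
    _ _ r (hmem z hz r) (dx z r) (dt r)
  have Dy := fun z hz r => hD (fun z => x₀ + z * Real.exp (-r)) (fun _ => T₀ - Real.exp (-r))
    _ _ z (hmem z hz r) (dy z r) (hasDerivAt_const _ _)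
  have ws : ∀ z ∈ Set.Ioo (-1 : ℝ) 1, ∀ r : ℝ, deriv (w z) r =
      Real.exp (-(a * r)) * (-a * u (x₀ + z * Real.exp (-r)) (T₀ - Real.exp (-r))
        + Real.exp (-r) * (B (x₀ + z * Real.exp (-r)) (T₀ - Real.exp (-r))
          - z * A (x₀ + z * Real.exp (-r)) (T₀ - Real.exp (-r)))) := by
    intro z hz r
    rw [funext (hw' z)]
    refine (((dL r).mul (Ds z hz r).1).congr_deriv ?_).deriv
    ring
  have wy : ∀ z ∈ Set.Ioo (-1 : ℝ) 1, deriv (fun z => w z s) z =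
      Real.exp (-(a * s)) * (Real.exp (-s)
        * A (x₀ + z * Real.exp (-s)) (T₀ - Real.exp (-s))) := by
    intro z hz
    rw [funext fun z => hw' z s]
    refine (((Dy z hz s).1.const_mul _).congr_deriv ?_).deriv
    ring
  have hnear : ∀ᶠ z in nhds y, z ∈ Set.Ioo (-1 : ℝ) 1 := isOpen_Ioo.mem_nhds hy
  obtain ⟨us, As, Bs⟩ := Ds y hy s
  obtain ⟨uy, Ay, By⟩ := Dy y hy s
  have wss := ((dL s).mul ((us.const_mul (-a)).add
    ((dE s).mul (Bs.sub (As.const_mul y))))).deriv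
  have wsy := (((uy.const_mul (-a)).add
    ((By.sub ((hasDerivAt_id' y).mul Ay)).const_mul (Real.exp (-s)))).const_mul
      (Real.exp (-(a * s)))).deriv
  have wdiv := ((hasDerivAt_rho_mul p y (hy2 y hy)).mul
    ((Ay.const_mul (Real.exp (-s))).const_mul (Real.exp (-(a * s))))).deriv
  have e1 : deriv (fun s' => deriv (w y) s') s = _ :=
    (congrArg (fun f => deriv f s) (funext fun r => ws y hy r)).trans wss
  have e2 : deriv (fun y' => deriv (fun s' => w y' s') s) y = _ :=
    (Filter.EventuallyEq.deriv_eq (hnear.mono fun z hz => ws z hz s)).trans wsy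
  have e3 : deriv (fun y' => rho p y' * (1 - y' ^ 2) * deriv (fun y'' => w y'' s) y') y = _ :=
    (Filter.EventuallyEq.deriv_eq (hnear.mono fun z hz =>
      congrArg (fun c => rho p z * (1 - z ^ 2) * c) (wy z hz))).trans wdiv
  have hrho : rho p y ≠ 0 := ne_of_gt (Real.rpow_pos_of_pos (hy2 y hy) _)
  -- scaling of the nonlinearity, from `a * (p - 1) = 2`
  have hnl : |w y s| ^ (p - 1) = Real.exp (-s) ^ 2
      * |u (x₀ + y * Real.exp (-s)) (T₀ - Real.exp (-s))| ^ (p - 1) := by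
    rw [hw', abs_mul, abs_of_pos (Real.exp_pos _),
      Real.mul_rpow (Real.exp_pos _).le (abs_nonneg _), ← Real.exp_mul, ← Real.exp_nat_mul]
    congr 2
    rw [ha]
    field_simp
    norm_num [mul_comm]
  have hR := hwave _ _ (hmem y hy s)
  rw [e1, e2, e3, hnl, ws y hy s, hw' y s]
  simp only [Pi.mul_apply, Pi.add_apply, Pi.sub_apply]
  rw [hR]
  have hc1 : 2 * (p + 1) / (p - 1) ^ 2 = a * (a + 1) := by
    rw [ha]; field_simp; ring
  have hc2 : (p + 3) / (p - 1) = 2 * a + 1 := by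
    rw [ha]; field_simp; ring
  rw [hc1, hc2, ← ha]
  clear_value a
  generalize u (x₀ + y * Real.exp (-s)) (T₀ - Real.exp (-s)) = U
  generalize A (x₀ + y * Real.exp (-s)) (T₀ - Real.exp (-s)) = U₁
  generalize B (x₀ + y * Real.exp (-s)) (T₀ - Real.exp (-s)) = U₂
  generalize P (x₀ + y * Real.exp (-s)) (T₀ - Real.exp (-s)) = U₁₁
  generalize Q (x₀ + y * Real.exp (-s)) (T₀ - Real.exp (-s)) = U₁₂
  generalize |U| ^ (p - 1) = N
  generalize Real.exp (-(a * s)) = L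
  generalize Real.exp (-s) = E
  generalize rho p y = ρ at hrho ⊢
  clear * - hrho
  field_simp
  ring
end

section
/- (Spectrum of the linearized soliton-interaction matrix) Let k ≥ 2 be an integer and p > 1 a real. Define σ_i = i(k−i)/2 for i = 0,…,k, and let M be the k×k real matrix with entries M_{i,i−1} = σ_{i−1} for 2 ≤ i ≤ k, M_{i,i} = −(σ_{i−1}+σ_i) for 1 ≤ i ≤ k, M_{i,i+1} = σ_i for 1 ≤ i ≤ k−1, and M_{i,j} = 0 when |i−j| ≥ 2. Then M is symmetric and its eigenvalues, counted with multiplicity, are exactly −i(i−1)/2 for i = 1,…,k; equivalently, the characteristic polynomial of M equals ∏_{i=1}^{k} (X + i(i−1)/2). In particular M is diagonalizable with k distinct real eigenvalues. -/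
/-!
Identify vectors with functions `f` on `{0, …, k-1}`. Then `M` acts as the second order difference
operator `(M f)(i) = σ (i+1) * (f (i+1) - f i) - σ i * (f i - f (i-1))`, where `σ 0 = σ k = 0` makes
the values of `f` outside the range irrelevant. Because `σ` is quadratic, `M` preserves the
filtration by polynomial degree. In the basis of binomials `i ↦ i.choose j` this is
`M (·.choose j) = -(j (j+1) / 2) (·.choose j) + σ j (·.choose (j-1))`
(`binomial_recurrence`), that is `M * V = V * T` with `V` the unitriangular Pascal matrix and `T`
upper triangular with diagonal entries `-j (j+1) / 2`. So `M` and `T` are similar, and the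
characteristic polynomial of `T` is read off from its diagonal.
-/

/-- The difference operator `M` maps the binomial `i ↦ i.choose j` to a combination of itself and
the binomial of degree `j - 1`. The truncated `i - 1` and `j - 1` at zero are harmless, since they
are multiplied by `σ 0 = 0`. -/
lemma binomial_recurrence (k : ℕ) (σ : ℕ → ℝ)
    (hσ : ∀ n : ℕ, σ n = (n : ℝ) * ((k : ℝ) - (n : ℝ)) / 2) (i j : ℕ) :
    σ i * (((i - 1).choose j : ℝ) - (i.choose j : ℝ))
      + σ (i + 1) * (((i + 1).choose j : ℝ) - (i.choose j : ℝ))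
      = (i.choose j : ℝ) * (-(((j : ℝ) + 1) * (j : ℝ) / 2))
        + (i.choose (j - 1) : ℝ) * σ j := by
  rcases j with _ | j
  · simp [hσ]
  have h2 : ((i : ℝ) + 1) * (i.choose j : ℝ)
      = ((i.choose j : ℝ) + (i.choose (j + 1) : ℝ)) * ((j : ℝ) + 1) := by
    have := Nat.add_one_mul_choose_eq i j
    rw [Nat.choose_succ_succ' i j] at this
    exact_mod_cast this
  have h1 : (i : ℝ) * (((i - 1).choose (j + 1) : ℝ) - (i.choose (j + 1) : ℝ))
      = -((j : ℝ) + 1) * (i.choose (j + 1) : ℝ) := by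
    rcases i with _ | n
    · simp
    have := Nat.add_one_mul_choose_eq n j
    have h : ((n : ℝ) + 1) * (n.choose j : ℝ)
      = ((n + 1).choose (j + 1) : ℝ) * ((j : ℝ) + 1) := by exact_mod_cast this
    have h' : ((n + 1).choose (j + 1) : ℝ) = (n.choose j : ℝ) + (n.choose (j + 1) : ℝ) := by
      exact_mod_cast Nat.choose_succ_succ' n j
    simp only [Nat.add_sub_cancel]
    push_cast
    linear_combination (-1 : ℝ) * h - ((n : ℝ) + 1) * h'
  rw [hσ, hσ, hσ, Nat.choose_succ_succ' i j]
  simp only [Nat.add_sub_cancel]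
  push_cast
  linear_combination (((k : ℝ) - i) / 2) * h1 + (((k : ℝ) - i - 1 - (j + 1)) / 2) * h2

/-- A row of the tridiagonal matrix applied to `f`; the values of `f` at `-1` (truncated to `0`)
and at `k` are immaterial because
`σ 0 = σ k = 0`. -/
lemma tridiagonal_row_sum (k : ℕ) (σ : ℕ → ℝ) (h0 : σ 0 = 0) (hk : σ k = 0) (f : ℕ → ℝ)
    (i : ℕ) (hi : i < k) :
    ∑ l ∈ Finset.range k, (if i = l then -(σ i + σ (i + 1))
        else if i = l + 1 then σ i
        else if l = i + 1 then σ (i + 1) else 0) * f l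
      = σ i * (f (i - 1) - f i) + σ (i + 1) * (f (i + 1) - f i) := by
  have hsplit : ∀ l, (if i = l then -(σ i + σ (i + 1))
        else if i = l + 1 then σ i
        else if l = i + 1 then σ (i + 1) else 0) * f l
      = (if l = i then -(σ i + σ (i + 1)) * f l else 0)
        + (if l = i - 1 then σ i * f l else 0)
        + (if l = i + 1 then σ (i + 1) * f l else 0) := by
    intro l
    rcases Nat.eq_zero_or_pos i with rfl | hpos
    · rcases l with _ | _ | l <;> simp [h0]
    · split_ifs <;> first | omega | ring
  have hi' : i - 1 < k := by omega
  simp only [hsplit, Finset.sum_add_distrib, Finset.sum_ite_eq', Finset.mem_range, hi, hi',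
    if_true]
  split_ifs with h
  · ring
  · have : i + 1 = k := by omega
    rw [this, hk]
    ring

theorem stmt12 (k : ℕ) (hk : 2 ≤ k) (p : ℝ) (hp : 1 < p)
    (σ : ℕ → ℝ) (hσ : ∀ n : ℕ, σ n = (n : ℝ) * ((k : ℝ) - (n : ℝ)) / 2)
    (M : Matrix (Fin k) (Fin k) ℝ)
    (hM : ∀ i j : Fin k,
      M i j = if (i : ℕ) = (j : ℕ) then -(σ (i : ℕ) + σ ((i : ℕ) + 1))
        else if (i : ℕ) = (j : ℕ) + 1 then σ (i : ℕ)
        else if (j : ℕ) = (i : ℕ) + 1 then σ ((i : ℕ) + 1)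
        else 0) :
    M.IsSymm ∧
    M.charpoly = ∏ i ∈ Finset.range k,
      (Polynomial.X + Polynomial.C (((i : ℝ) + 1) * (i : ℝ) / 2)) := by
  have h0 : σ 0 = 0 := by simp [hσ]
  have hkk : σ k = 0 := by simp [hσ]
  constructor
  · refine Matrix.IsSymm.ext fun i j => ?_
    rw [hM, hM]
    split_ifs <;> first | omega | simp_all
  let V : Matrix (Fin k) (Fin k) ℝ := Matrix.of fun i j => ((i : ℕ).choose (j : ℕ) : ℝ)
  let T : Matrix (Fin k) (Fin k) ℝ := Matrix.of fun l j =>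
    if (l : ℕ) = (j : ℕ) then -((((j : ℕ) : ℝ) + 1) * ((j : ℕ) : ℝ) / 2)
    else if (l : ℕ) + 1 = (j : ℕ) then σ (j : ℕ) else 0
  have hdet : V.det = 1 := by
    rw [Matrix.det_of_isLowerTriangular V]
    · simp [V]
    · intro i j hij
      have hij' : (i : ℕ) < (j : ℕ) := by simpa using hij
      simp [V, Nat.choose_eq_zero_of_lt hij']
  have hMV : M * V = V * T := by
    ext i j
    have hL : (M * V) i j = σ i * ((((i : ℕ) - 1).choose j : ℝ) - ((i : ℕ).choose j : ℝ))
        + σ (i + 1) * ((((i : ℕ) + 1).choose j : ℝ) - ((i : ℕ).choose j : ℝ)) := by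
      rw [← tridiagonal_row_sum k σ h0 hkk (fun l => (l.choose j : ℝ)) i i.2,
        ← Fin.sum_univ_eq_sum_range (fun l => (if (i : ℕ) = l then -(σ i + σ (i + 1))
          else if (i : ℕ) = l + 1 then σ i
          else if l = i + 1 then σ (i + 1) else 0) * (l.choose j : ℝ)), Matrix.mul_apply]
      simp only [hM, V, Matrix.of_apply]
    have hR : (V * T) i j = ((i : ℕ).choose j : ℝ) * (-((((j : ℕ) : ℝ) + 1) * ((j : ℕ) : ℝ) / 2))
        + ((i : ℕ).choose ((j : ℕ) - 1) : ℝ) * σ j := by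
      have hsplit : ∀ l : ℕ, ((i : ℕ).choose l : ℝ) *
          (if l = (j : ℕ) then -((((j : ℕ) : ℝ) + 1) * ((j : ℕ) : ℝ) / 2)
            else if l + 1 = (j : ℕ) then σ (j : ℕ) else 0)
          = (if l = (j : ℕ) then
              ((i : ℕ).choose l : ℝ) * (-((((j : ℕ) : ℝ) + 1) * ((j : ℕ) : ℝ) / 2)) else 0)
            + (if l = (j : ℕ) - 1 then ((i : ℕ).choose l : ℝ) * σ j else 0) := by
        intro l
        rcases Nat.eq_zero_or_pos (j : ℕ) with hj | hpos
        · rw [hj]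
          rcases l with _ | l <;> simp [h0]
        · split_ifs <;> first | omega | ring
      have hj' : (j : ℕ) - 1 < k := by omega
      simp only [Matrix.mul_apply, V, T, Matrix.of_apply, hsplit]
      rw [Fin.sum_univ_eq_sum_range (fun l => (if l = (j : ℕ) then
              ((i : ℕ).choose l : ℝ) * (-((((j : ℕ) : ℝ) + 1) * ((j : ℕ) : ℝ) / 2)) else 0)
            + (if l = (j : ℕ) - 1 then ((i : ℕ).choose l : ℝ) * σ j else 0))]
      simp [Finset.sum_add_distrib, Finset.sum_ite_eq', hj']
    rw [hL, hR]
    exact binomial_recurrence k σ hσ i j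
  have hunit : IsUnit V := (Matrix.isUnit_iff_isUnit_det V).2 (by simp [hdet])
  obtain ⟨U, hU⟩ := hunit
  have hconj : M = U.val * T * U⁻¹.val := by
    rw [hU, ← hMV, ← hU, mul_assoc, Units.mul_inv, mul_one]
  have hT : T.BlockTriangular id := by
    intro i j hij
    have hij' : (j : ℕ) < (i : ℕ) := by simpa using hij
    simp only [T, Matrix.of_apply]
    rw [if_neg (by omega), if_neg (by omega)]
  rw [hconj, Matrix.coe_units_inv, Matrix.charpoly_units_conj, Matrix.charpoly_of_isUpperTriangular T hT,
    ← Fin.prod_univ_eq_prod_range (fun i : ℕ =>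
      (Polynomial.X + Polynomial.C (((i : ℝ) + 1) * (i : ℝ) / 2)))]
  refine Finset.prod_congr rfl fun i _ => ?_
  simp only [T, Matrix.of_apply, if_true, map_neg, sub_neg_eq_add]
end

section
/- (Control of a logarithmically-critical nonlinearity) For every real p > 1 and every α > 0 there exists a constant C > 0 such that for all s ≥ 1 and all u ∈ ℝ: |u|^p / ( log(2 + e^{4s/(p−1)} u²) )^{α} ≤ C ( e^{−ps/(p−1)} + s^{−α} |u|^{p} ). (Indeed, if |u| ≤ e^{−s/(p−1)} the left-hand side is at most C e^{−ps/(p−1)}, while if |u| > e^{−s/(p−1)} then log(2 + e^{4s/(p−1)} u²) ≥ 2s/(p−1).) -/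
/-!
The two terms on the right correspond to two regimes of `u`, separated at `|u| = e^{-s/(p-1)}`.
Below the threshold `|u|^p ≤ e^{-ps/(p-1)}`, and the logarithm is at least `log 2`. Above it
`e^{4s/(p-1)} u² ≥ e^{2s/(p-1)}`, so the logarithm is at least `2s/(p-1)`, which supplies the
factor `s^{-α}`. The sum of the two resulting constants serves as `C`.
-/

theorem stmt14 (p α : ℝ) (hp : 1 < p) (hα : 0 < α) :
    ∃ C : ℝ, 0 < C ∧ ∀ s : ℝ, 1 ≤ s → ∀ u : ℝ,
      |u| ^ p / (Real.log (2 + Real.exp (4 * s / (p - 1)) * u ^ 2)) ^ α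
        ≤ C * (Real.exp (-p * s / (p - 1)) + s ^ (-α) * |u| ^ p) := by
  have hd : 0 < p - 1 := by linarith
  have hl2 : 0 < Real.log 2 := Real.log_pos (by norm_num)
  have hA : 0 < (Real.log 2) ^ (-α) := Real.rpow_pos_of_pos hl2 _
  have hB : 0 < (2 / (p - 1)) ^ (-α) := Real.rpow_pos_of_pos (by positivity) _
  refine ⟨(Real.log 2) ^ (-α) + (2 / (p - 1)) ^ (-α), by positivity, ?_⟩
  intro s hs u
  have hs0 : 0 < s := by linarith
  have hup : 0 ≤ |u| ^ p := Real.rpow_nonneg (abs_nonneg u) p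
  have hE : 0 < Real.exp (-p * s / (p - 1)) := Real.exp_pos _
  have hS : 0 ≤ s ^ (-α) * |u| ^ p := mul_nonneg (Real.rpow_nonneg hs0.le _) hup
  set L := Real.log (2 + Real.exp (4 * s / (p - 1)) * u ^ 2) with hL
  have hL2 : Real.log 2 ≤ L :=
    Real.log_le_log (by norm_num) (by linarith [show 0 ≤ Real.exp (4 * s / (p - 1)) * u ^ 2 by positivity])
  have hL0 : 0 < L := hl2.trans_le hL2
  rw [div_eq_mul_inv, ← Real.rpow_neg hL0.le]
  rcases le_or_gt |u| (Real.exp (-s / (p - 1))) with h | h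
  · have h1 : |u| ^ p ≤ Real.exp (-p * s / (p - 1)) := by
      calc |u| ^ p ≤ (Real.exp (-s / (p - 1))) ^ p :=
            Real.rpow_le_rpow (abs_nonneg u) h (by linarith)
        _ = Real.exp (-p * s / (p - 1)) := by
            rw [← Real.exp_mul]; congr 1; ring
    have h2 : L ^ (-α) ≤ (Real.log 2) ^ (-α) :=
      Real.rpow_le_rpow_of_nonpos hl2 hL2 (by linarith)
    have h3 := mul_le_mul h1 h2 (Real.rpow_nonneg hL0.le _) hE.le
    nlinarith [mul_nonneg hA.le hS, mul_pos hB hE, mul_nonneg hB.le hS]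
  · have hLs : 2 / (p - 1) * s ≤ L := by
      rw [hL, Real.le_log_iff_exp_le (by positivity)]
      have hu : Real.exp (-s / (p - 1)) ^ 2 ≤ u ^ 2 := by
        rw [← sq_abs u]; gcongr
      have he : Real.exp (2 / (p - 1) * s)
          = Real.exp (4 * s / (p - 1)) * Real.exp (-s / (p - 1)) ^ 2 := by
        rw [← Real.exp_nat_mul, ← Real.exp_add]; congr 1; push_cast; ring
      have := mul_le_mul_of_nonneg_left hu (Real.exp_pos (4 * s / (p - 1))).le
      linarith
    have h2 : L ^ (-α) ≤ (2 / (p - 1)) ^ (-α) * s ^ (-α) := by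
      rw [← Real.mul_rpow (by positivity) hs0.le]
      exact Real.rpow_le_rpow_of_nonpos (by positivity) hLs (by linarith)
    have h3 := mul_le_mul_of_nonneg_left h2 hup
    nlinarith [mul_nonneg hA.le hS, mul_pos hB hE, mul_pos hA hE]
end

section
/- (Smallness of the perturbation term against a soliton weight) Fix a real p > 1, reals α > 1 and M₀ > 0, an integer k ≥ 1, and a continuous function f : ℝ → ℝ satisfying |f(u)| ≤ M₀ (1 + |u|^p / (log(2+u²))^{α}) for all u ∈ ℝ. Then there exist constants C > 0 and s₀ > 0 such that for all s ≥ s₀, all d* ∈ (−1,1), all d₁,…,d_k ∈ (−1,1) and ν₁,…,ν_k ∈ ℝ with |ν_j| ≤ (1−|d_j|)/2 for each j, and every h ∈ H¹_loc(−1,1) with ‖h‖_{H₀} ≤ 1, setting K(y) = Σ_{j=1}^{k} (−1)^j κ₁*(d_j, ν_j, y), one has ∫_{−1}^{1} e^{−2ps/(p−1)} | f( e^{2s/(p−1)} (K(y)+h(y)) ) | κ(d*, y) ρ(y) dy ≤ C s^{−α}. -/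
/-!
Write `b = 1/(p-1)`, so that `ρ = (1 - y²)^{2b}`. The proof rests on one pointwise bound,
`|K + h| ≤ A (1 - y²)^{-b}` with `A` independent of all parameters.

* For the solitons (`abs_kappa1star_le`) it follows from `1 + dy + ν ≥ (1 + dy)/2` and
  `(1 - d²)(1 - y²) ≤ (1 + dy)²`.
* For `h` (`exists_sup_bound`) it is the embedding of `H₀` into a weighted `L^∞` space:
  `|h|` is bounded at some point of `(-1/2, 1/2)` because `∫ h²ρ ≤ 1`, and from there `h'` is
  integrated with Young's inequality, the weight being tuned to the endpoint
  (`sub_le_of_energy`).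

The growth hypothesis gives
`e^{-2ps/(p-1)} |f(e^{2s/(p-1)} v)| ≤ C s^{-α} (1 + |v|^p)` for large `s`
(`exists_nonlinearity_bound`). With `v = K + h` and `b(p-1) = 1`, the integrand is at most
`C s^{-α} (1 - d*²)^b (1 - y²)^{b-1} (1 + d*y)^{-2b}`. The Lorentz boost of parameter `d*`
turns the integral of this function of `y` into that of `(1 - y²)^{b-1}`, which is finite and does
not depend on `d*` (`lintegral_boost_le`, `lintegral_weight_lt_top`).
-/

open MeasureTheory

noncomputable def kappa0 (p : ℝ) : ℝ := (2 * (p + 1) / (p - 1) ^ 2) ^ ((1 : ℝ) / (p - 1))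

noncomputable def solKappa (p d y : ℝ) : ℝ :=
  kappa0 p * (1 - d ^ 2) ^ ((1 : ℝ) / (p - 1)) / (1 + d * y) ^ ((2 : ℝ) / (p - 1))

noncomputable def kappa1star (p d ν y : ℝ) : ℝ :=
  kappa0 p * (1 - d ^ 2) ^ ((1 : ℝ) / (p - 1)) / (1 + d * y + ν) ^ ((2 : ℝ) / (p - 1))

/-! ### The Lorentz-invariant integral -/

lemma one_sub_sq_pos {y : ℝ} (hy : y ∈ Set.Ioo (-1 : ℝ) 1) : 0 < 1 - y ^ 2 := by
  nlinarith [hy.1, hy.2]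

lemma one_add_mul_pos {d y : ℝ} (hd : d ∈ Set.Ioo (-1 : ℝ) 1) (hy : y ∈ Set.Ioo (-1 : ℝ) 1) :
    0 < 1 + d * y := by
  have hd' : |d| < 1 := abs_lt.2 hd
  have hy' : |y| < 1 := abs_lt.2 hy
  have : |d * y| < 1 := by
    rw [abs_mul]
    exact mul_lt_one_of_nonneg_of_lt_one_left (abs_nonneg _) hd' hy'.le
  linarith [(abs_lt.1 this).1]

/-- The Lorentz boost `y ↦ (y + d) / (1 + d y)` of `(-1, 1)` carries the left integrand to the
right one, which makes the bound uniform in `d`. -/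
lemma lintegral_boost_le (b : ℝ) {d : ℝ} (hd : d ∈ Set.Ioo (-1 : ℝ) 1) :
    ∫⁻ y in Set.Ioo (-1 : ℝ) 1,
        ENNReal.ofReal ((1 - d ^ 2) ^ b * (1 - y ^ 2) ^ (b - 1) / (1 + d * y) ^ (2 * b))
      ≤ ∫⁻ y in Set.Ioo (-1 : ℝ) 1, ENNReal.ofReal ((1 - y ^ 2) ^ (b - 1)) := by
  have hD := one_sub_sq_pos hd
  set φ : ℝ → ℝ := fun y => (y + d) / (1 + d * y) with hφ
  set φ' : ℝ → ℝ := fun y => (1 - d ^ 2) / (1 + d * y) ^ 2 with hφ'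
  have hder : ∀ x ∈ Set.Ioo (-1 : ℝ) 1, HasDerivWithinAt φ (φ' x) (Set.Ioo (-1 : ℝ) 1) x := by
    intro x hx
    have hpos := one_add_mul_pos hd hx
    have h1 : HasDerivAt (fun y : ℝ => y + d) 1 x := (hasDerivAt_id x).add_const d
    have h2 : HasDerivAt (fun y : ℝ => 1 + d * y) d x := by
      simpa using ((hasDerivAt_id x).const_mul d).const_add 1
    have h3 := h1.div h2 hpos.ne'
    refine (h3.congr_deriv ?_).hasDerivWithinAt
    simp only [hφ']
    congr 1
    ring
  have hinj : Set.InjOn φ (Set.Ioo (-1 : ℝ) 1) := by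
    intro x hx y hy hxy
    have h1 := one_add_mul_pos hd hx
    have h2 := one_add_mul_pos hd hy
    simp only [hφ] at hxy
    rw [div_eq_div_iff h1.ne' h2.ne'] at hxy
    have : (1 - d ^ 2) * (x - y) = 0 := by linarith
    rcases mul_eq_zero.1 this with h | h
    · exact absurd h hD.ne'
    · linarith
  have himg : φ '' Set.Ioo (-1 : ℝ) 1 ⊆ Set.Ioo (-1 : ℝ) 1 := by
    rintro _ ⟨x, hx, rfl⟩
    have h1 := one_add_mul_pos hd hx
    simp only [hφ]
    constructor
    · rw [lt_div_iff₀ h1]; nlinarith [hx.1, hx.2, hd.1, hd.2]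
    · rw [div_lt_iff₀ h1]; nlinarith [hx.1, hx.2, hd.1, hd.2]
  have hcv := lintegral_image_eq_lintegral_abs_deriv_mul measurableSet_Ioo hder hinj
    (fun y => ENNReal.ofReal ((1 - y ^ 2) ^ (b - 1)))
  refine le_trans (le_of_eq ?_) (lintegral_mono_set himg)
  rw [hcv]
  refine setLIntegral_congr_fun measurableSet_Ioo fun y hy => ?_
  have h1 := one_add_mul_pos hd hy
  have hY := one_sub_sq_pos hy
  have hφ'pos : 0 < φ' y := by simp only [hφ']; positivity
  rw [abs_of_pos hφ'pos, ← ENNReal.ofReal_mul hφ'pos.le]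
  congr 1
  have e1 : 1 - φ y ^ 2 = (1 - d ^ 2) * (1 - y ^ 2) / (1 + d * y) ^ 2 := by
    simp only [hφ]; rw [div_pow, eq_div_iff (by positivity), sub_mul, div_mul_cancel₀ _ (by positivity)]; ring
  rw [e1, Real.div_rpow (by positivity) (by positivity), Real.mul_rpow hD.le hY.le]
  have e2 : (1 - d ^ 2) ^ b = (1 - d ^ 2) ^ (b - 1) * (1 - d ^ 2) := by
    rw [Real.rpow_sub_one hD.ne']; field_simp
  have e3 : (1 + d * y) ^ (2 * b) = ((1 + d * y) ^ 2) ^ (b - 1) * (1 + d * y) ^ 2 := by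
    rw [Real.rpow_sub_one (by positivity), Real.rpow_mul h1.le]
    simp only [Real.rpow_two]
    field_simp
  rw [e2, e3]
  simp only [hφ']
  have : 0 < ((1 + d * y) ^ 2) ^ (b - 1) := by positivity
  field_simp

lemma lintegral_weight_lt_top {b : ℝ} (hb : 0 < b) :
    ∫⁻ y in Set.Ioo (-1 : ℝ) 1, ENNReal.ofReal ((1 - y ^ 2) ^ (b - 1)) < ⊤ := by
  have i0 : IntervalIntegrable (fun x : ℝ => x ^ (b - 1)) volume 0 2 :=
    intervalIntegral.intervalIntegrable_rpow' (by linarith)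
  have i1 : IntervalIntegrable (fun x : ℝ => (x + 1) ^ (b - 1)) volume (-1) 1 := by
    have := i0.comp_add_right 1
    norm_num at this
    exact this
  have i2 : IntervalIntegrable (fun x : ℝ => (1 - x) ^ (b - 1)) volume (-1) 1 := by
    have := i0.comp_sub_left 1
    norm_num at this
    exact this.symm
  have i3 := ((intervalIntegrable_const (c := (1 : ℝ)) (μ := volume)
    (a := -1) (b := 1)).add i1).add i2
  rw [intervalIntegrable_iff_integrableOn_Ioo_of_le (by norm_num)] at i3
  refine lt_of_le_of_lt (setLIntegral_mono' measurableSet_Ioo fun y hy => ?_)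
    (Integrable.lintegral_lt_top i3)
  apply ENNReal.ofReal_le_ofReal
  have hY := one_sub_sq_pos hy
  have p1 : 0 < y + 1 := by linarith [hy.1]
  have p2 : 0 < 1 - y := by linarith [hy.2]
  have q1 : 0 < (y + 1) ^ (b - 1) := by positivity
  have q2 : 0 < (1 - y) ^ (b - 1) := by positivity
  change _ ≤ 1 + (y + 1) ^ (b - 1) + (1 - y) ^ (b - 1)
  rcases le_total 1 b with h | h
  · have : (1 - y ^ 2) ^ (b - 1) ≤ 1 :=
      Real.rpow_le_one hY.le (by nlinarith [sq_nonneg y]) (by linarith)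
    linarith
  · -- one of the factors `1 + y`, `1 - y` is at least `1`, so its negative power is at most `1`
    have e : (1 - y ^ 2) ^ (b - 1) = (y + 1) ^ (b - 1) * (1 - y) ^ (b - 1) := by
      rw [← Real.mul_rpow p1.le p2.le]; ring_nf
    rw [e]
    rcases le_total 0 y with h0 | h0
    · have : (y + 1) ^ (b - 1) ≤ 1 := Real.rpow_le_one_of_one_le_of_nonpos (by linarith) (by linarith)
      nlinarith
    · have : (1 - y) ^ (b - 1) ≤ 1 := Real.rpow_le_one_of_one_le_of_nonpos (by linarith) (by linarith)
      nlinarith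

/-! ### The weighted sup bound for `H₀` -/

/-- With `Φ x = x (1 - x²)^{-a}`, whose derivative dominates `min 1 (2a) · (1 - x²)^{-a-1}`,
the inequality `h' ≤ (l/2) h'² (1-x²)^{1+a} + (1/(2l)) (1-x²)^{-1-a}` integrates explicitly. -/
lemma sub_le_of_energy {a : ℝ} (ha : 0 < a) {h : ℝ → ℝ}
    (hd : ∀ y ∈ Set.Ioo (-1 : ℝ) 1, DifferentiableAt ℝ h y)
    (hE : ∫⁻ y in Set.Ioo (-1 : ℝ) 1,
      ENNReal.ofReal ((deriv h y) ^ 2 * (1 - y ^ 2) ^ (1 + a)) ≤ 1)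
    {u v l : ℝ} (hu : u ∈ Set.Ioo (-1 : ℝ) 1) (hv : v ∈ Set.Ioo (-1 : ℝ) 1) (huv : u ≤ v)
    (hl : 0 < l) :
    h v - h u ≤ l / 2 +
      (v * (1 - v ^ 2) ^ (-a) - u * (1 - u ^ 2) ^ (-a)) / (2 * min 1 (2 * a) * l) := by
  set c : ℝ := min 1 (2 * a) with hc
  have hcpos : 0 < c := by positivity
  set G : ℝ → ℝ := fun y => (deriv h y) ^ 2 * (1 - y ^ 2) ^ (1 + a) with hG
  have hGm : Measurable G := by
    have := measurable_deriv h
    fun_prop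
  have hG0 : ∀ y ∈ Set.Ioo (-1 : ℝ) 1, 0 ≤ G y := fun y hy => by
    have := one_sub_sq_pos hy
    simp only [hG]; positivity
  have hsub : Set.Icc u v ⊆ Set.Ioo (-1 : ℝ) 1 := fun x hx =>
    ⟨lt_of_lt_of_le hu.1 hx.1, lt_of_le_of_lt hx.2 hv.2⟩
  have hG0' : 0 ≤ᵐ[volume.restrict (Set.Ioo (-1 : ℝ) 1)] G :=
    (ae_restrict_iff' measurableSet_Ioo).2 (Filter.Eventually.of_forall hG0)
  have hGi : IntegrableOn G (Set.Ioo (-1 : ℝ) 1) := by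
    refine ⟨hGm.aestronglyMeasurable, ?_⟩
    rw [hasFiniteIntegral_iff_ofReal hG0']
    exact lt_of_le_of_lt hE ENNReal.one_lt_top
  have hGint : ∫ y in Set.Ioo (-1 : ℝ) 1, G y ≤ 1 := by
    rw [integral_eq_lintegral_of_nonneg_ae hG0' hGm.aestronglyMeasurable]
    exact ENNReal.toReal_le_of_le_ofReal zero_le_one (by simpa using hE)
  have hGuv : ∫ y in u..v, G y ≤ 1 := by
    rw [intervalIntegral.integral_of_le huv]
    exact (setIntegral_mono_set hGi hG0'
      (Set.Ioc_subset_Icc_self.trans hsub).eventuallyLE).trans hGint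
  have hΦ : ∀ x ∈ Set.Ioo (-1 : ℝ) 1, HasDerivAt (fun x : ℝ => x * (1 - x ^ 2) ^ (-a))
      ((1 - x ^ 2) ^ (-a - 1) * (1 - x ^ 2 + 2 * a * x ^ 2)) x := by
    intro x hx
    have hX := one_sub_sq_pos hx
    have h1 : HasDerivAt (fun x : ℝ => 1 - x ^ 2) (-(2 * x)) x := by
      simpa using (hasDerivAt_pow 2 x).const_sub 1
    have h2 := (hasDerivAt_id x).mul (h1.rpow_const (p := -a) (Or.inl hX.ne'))
    refine h2.congr_deriv ?_
    simp only [id]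
    have : (1 - x ^ 2) ^ (-a) = (1 - x ^ 2) ^ (-a - 1) * (1 - x ^ 2) := by
      rw [Real.rpow_sub_one hX.ne']; field_simp
    rw [this]; ring
  have hderiv : ∀ x ∈ Set.Ioo (-1 : ℝ) 1,
      HasDerivAt (fun x => h x - 1 / (2 * c * l) * (x * (1 - x ^ 2) ^ (-a)))
        (deriv h x - 1 / (2 * c * l) *
          ((1 - x ^ 2) ^ (-a - 1) * (1 - x ^ 2 + 2 * a * x ^ 2))) x :=
    fun x hx => (hd x hx).hasDerivAt.sub ((hΦ x hx).const_mul _)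
  have key := intervalIntegral.sub_le_integral_of_hasDeriv_right_of_le (φ := fun x => l / 2 * G x)
    huv (fun x hx => (hderiv x (hsub hx)).continuousAt.continuousWithinAt)
    (fun x hx => (hderiv x (hsub (Set.Ioo_subset_Icc_self hx))).hasDerivWithinAt)
    ((hGi.mono_set hsub).const_mul _) (fun x hx => by
      have hx' := hsub (Set.Ioo_subset_Icc_self hx)
      have hX := one_sub_sq_pos hx'
      set D := deriv h x
      set P := (1 - x ^ 2) ^ (-a - 1) with hP
      have hPpos : 0 < P := by positivity
      have hinv : (1 - x ^ 2) ^ (1 + a) = P⁻¹ := by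
        rw [hP, ← Real.rpow_neg hX.le]; congr 1; ring
      have hcle : c ≤ 1 - x ^ 2 + 2 * a * x ^ 2 := by
        nlinarith [min_le_left 1 (2 * a), min_le_right 1 (2 * a), sq_nonneg x]
      have h1 : 1 / (2 * l) * P ≤
          1 / (2 * c * l) * (P * (1 - x ^ 2 + 2 * a * x ^ 2)) := by
        have : 1 / (2 * l) * P = 1 / (2 * c * l) * (P * c) := by field_simp
        rw [this]; gcongr
      have h2 : D ≤ l / 2 * (D ^ 2 * P⁻¹) + 1 / (2 * l) * P := by
        have : l / 2 * (D ^ 2 * P⁻¹) + 1 / (2 * l) * P - D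
            = (l * D - P) ^ 2 / (2 * l * P) := by field_simp; ring
        have : 0 ≤ (l * D - P) ^ 2 / (2 * l * P) := by positivity
        linarith
      simp only [hG]
      rw [hinv]
      linarith)
  rw [intervalIntegral.integral_const_mul] at key
  have : l / 2 * ∫ y in u..v, G y ≤ l / 2 := by nlinarith
  have e : (v * (1 - v ^ 2) ^ (-a) - u * (1 - u ^ 2) ^ (-a)) / (2 * c * l)
    = 1 / (2 * c * l) * (v * (1 - v ^ 2) ^ (-a)) - 1 / (2 * c * l) * (u * (1 - u ^ 2) ^ (-a)) := by
    ring
  rw [e]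
  linarith

/-- The point `z` comes from averaging `h²ρ` over an interval of length one. -/
lemma exists_small_value {b : ℝ} (hb : 0 < b) {h : ℝ → ℝ}
    (hL : ∫⁻ y in Set.Ioo (-1 : ℝ) 1, ENNReal.ofReal (h y ^ 2 * (1 - y ^ 2) ^ (2 * b)) ≤ 1) :
    ∃ z ∈ Set.Ioo (-(1 / 2) : ℝ) (1 / 2), |h z| ≤ 2 * (3 / 4) ^ (-b) := by
  by_contra! hcon
  have h1 : ∫⁻ _y in Set.Ioo (-(1 / 2) : ℝ) (1 / 2), ENNReal.ofReal 4 ≤ 1 := by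
    refine le_trans ?_ hL
    refine le_trans (setLIntegral_mono' measurableSet_Ioo fun y hy => ?_)
      (lintegral_mono_set (Set.Ioo_subset_Ioo (by norm_num) (by norm_num)))
    apply ENNReal.ofReal_le_ofReal
    have hY : (3 / 4 : ℝ) ≤ 1 - y ^ 2 := by nlinarith [hy.1, hy.2]
    have h3 : (3 / 4 : ℝ) ^ b ≤ (1 - y ^ 2) ^ b := Real.rpow_le_rpow (by norm_num) hY hb.le
    have h4 : (1 - y ^ 2) ^ (2 * b) = ((1 - y ^ 2) ^ b) ^ 2 := by
      rw [mul_comm, Real.rpow_mul (by linarith), Real.rpow_two]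
    have h5 : (2 : ℝ) ≤ |h y| * (1 - y ^ 2) ^ b := by
      have e : (2 : ℝ) = 2 * (3 / 4) ^ (-b) * (3 / 4) ^ b := by
        rw [mul_assoc, ← Real.rpow_add (by norm_num)]; simp
      calc (2 : ℝ) = 2 * (3 / 4) ^ (-b) * (3 / 4) ^ b := e
        _ ≤ _ := mul_le_mul (hcon y hy).le h3 (by positivity) (abs_nonneg _)
    rw [h4, ← sq_abs (h y), ← mul_pow]
    nlinarith
  rw [setLIntegral_const, Real.volume_Ioo, ← ENNReal.ofReal_mul (by norm_num)] at h1
  rw [ENNReal.ofReal_le_one] at h1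
  norm_num at h1

/-- The embedding of the unit ball of `H₀` into the weighted sup space: `|h| ≤ C (1 - y²)^{-b}`. -/
lemma exists_sup_bound {b : ℝ} (hb : 0 < b) :
    ∃ C : ℝ, 0 < C ∧ ∀ h : ℝ → ℝ,
      (∀ y ∈ Set.Ioo (-1 : ℝ) 1, DifferentiableAt ℝ h y) →
      (∫⁻ y in Set.Ioo (-1 : ℝ) 1, ENNReal.ofReal
        ((h y ^ 2 + (deriv h y) ^ 2 * (1 - y ^ 2)) * (1 - y ^ 2) ^ (2 * b))) ≤ 1 →
      ∀ y ∈ Set.Ioo (-1 : ℝ) 1, |h y| ≤ C * (1 - y ^ 2) ^ (-b) := by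
  set c : ℝ := min 1 (2 * (2 * b)) with hc
  have hcpos : 0 < c := by positivity
  set q : ℝ := (3 / 4) ^ (-(2 * b)) with hq
  have hqpos : 0 < q := by positivity
  refine ⟨1 / 2 + (1 + q) / (2 * c) + 2 * (3 / 4) ^ (-b), by positivity,
    fun h hd hE y hy => ?_⟩
  have hL : ∫⁻ y in Set.Ioo (-1 : ℝ) 1, ENNReal.ofReal (h y ^ 2 * (1 - y ^ 2) ^ (2 * b)) ≤ 1 := by
    refine le_trans (setLIntegral_mono' measurableSet_Ioo fun y hy => ?_) hE
    have hY := one_sub_sq_pos hy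
    apply ENNReal.ofReal_le_ofReal
    have : 0 ≤ (deriv h y) ^ 2 * (1 - y ^ 2) := by positivity
    gcongr
    linarith
  have hE' : ∫⁻ y in Set.Ioo (-1 : ℝ) 1,
      ENNReal.ofReal ((deriv h y) ^ 2 * (1 - y ^ 2) ^ (1 + 2 * b)) ≤ 1 := by
    refine le_trans (setLIntegral_mono' measurableSet_Ioo fun y hy => ?_) hE
    have hY := one_sub_sq_pos hy
    apply ENNReal.ofReal_le_ofReal
    rw [Real.rpow_add hY, Real.rpow_one, ← mul_assoc]
    gcongr
    linarith [sq_nonneg (h y)]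
  have hEneg : ∫⁻ y in Set.Ioo (-1 : ℝ) 1,
      ENNReal.ofReal ((deriv (fun x => -h x) y) ^ 2 * (1 - y ^ 2) ^ (1 + 2 * b)) ≤ 1 := by
    simpa [deriv.fun_neg] using hE'
  have hdneg : ∀ y ∈ Set.Ioo (-1 : ℝ) 1, DifferentiableAt ℝ (fun x => -h x) y :=
    fun y hy => (hd y hy).neg
  obtain ⟨z, hz, hzb⟩ := exists_small_value hb hL
  have hz' : z ∈ Set.Ioo (-1 : ℝ) 1 := ⟨by linarith [hz.1], by linarith [hz.2]⟩
  have hY := one_sub_sq_pos hy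
  have hY1 : 1 - y ^ 2 ≤ 1 := by nlinarith [sq_nonneg y]
  have hZ := one_sub_sq_pos hz'
  set L : ℝ := (1 - y ^ 2) ^ (-b) with hLdef
  have hLpos : 0 < L := by positivity
  have hL1 : 1 ≤ L := Real.one_le_rpow_of_pos_of_le_one_of_nonpos hY hY1 (by linarith)
  have hL2 : (1 - y ^ 2) ^ (-(2 * b)) = L ^ 2 := by
    rw [hLdef, ← Real.rpow_mul_natCast hY.le]; congr 1; push_cast; ring
  have hΦy : |y * (1 - y ^ 2) ^ (-(2 * b))| ≤ L ^ 2 := by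
    rw [hL2, abs_mul, abs_of_pos (pow_pos hLpos 2)]
    have : |y| ≤ 1 := abs_le.2 ⟨hy.1.le, hy.2.le⟩
    nlinarith [pow_pos hLpos 2]
  have hΦz : |z * (1 - z ^ 2) ^ (-(2 * b))| ≤ q * L ^ 2 := by
    have h1 : (1 - z ^ 2) ^ (-(2 * b)) ≤ q :=
      Real.rpow_le_rpow_of_nonpos (by norm_num) (by nlinarith [hz.1, hz.2]) (by linarith)
    have h2 : |z| ≤ 1 := abs_le.2 ⟨hz'.1.le, hz'.2.le⟩
    rw [abs_mul, abs_of_pos (Real.rpow_pos_of_pos hZ _)]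
    have h3 : 0 < (1 - z ^ 2) ^ (-(2 * b)) := by positivity
    calc |z| * (1 - z ^ 2) ^ (-(2 * b)) ≤ 1 * q := by gcongr
      _ ≤ q * L ^ 2 := by nlinarith [one_le_pow₀ hL1 (n := 2)]
  -- the choice `l = (1 - y²)^{-b}` balances the two terms of the oscillation estimate
  have aux : ∀ t : ℝ, t ≤ (1 + q) * L ^ 2 →
      L / 2 + t / (2 * c * L) ≤ (1 / 2 + (1 + q) / (2 * c)) * L := by
    intro t ht
    have : t / (2 * c * L) ≤ (1 + q) * L ^ 2 / (2 * c * L) := by gcongr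
    have e : (1 + q) * L ^ 2 / (2 * c * L) = (1 + q) / (2 * c) * L := by field_simp
    linarith
  have hosc : |h y - h z| ≤ (1 / 2 + (1 + q) / (2 * c)) * L := by
    rw [abs_le] at hΦy hΦz
    rcases le_total z y with hzy | hzy
    · have a1 := sub_le_of_energy (by positivity) hd hE' hz' hy hzy hLpos
      have a2 := sub_le_of_energy (by positivity) hdneg hEneg hz' hy hzy hLpos
      have a3 := aux _ (show y * (1 - y ^ 2) ^ (-(2 * b)) - z * (1 - z ^ 2) ^ (-(2 * b))
        ≤ (1 + q) * L ^ 2 by linarith)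
      rw [abs_le]; constructor <;> linarith
    · have a1 := sub_le_of_energy (by positivity) hd hE' hy hz' hzy hLpos
      have a2 := sub_le_of_energy (by positivity) hdneg hEneg hy hz' hzy hLpos
      have a3 := aux _ (show z * (1 - z ^ 2) ^ (-(2 * b)) - y * (1 - y ^ 2) ^ (-(2 * b))
        ≤ (1 + q) * L ^ 2 by linarith)
      rw [abs_le]; constructor <;> linarith
  have h1 : |h y| ≤ |h y - h z| + |h z| := by
    simpa using abs_add_le (h y - h z) (h z)
  have h2 : 2 * (3 / 4 : ℝ) ^ (-b) ≤ 2 * (3 / 4) ^ (-b) * L :=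
    le_mul_of_one_le_right (by positivity) hL1
  linarith

/-! ### Pointwise bounds on the solitons and on the nonlinearity -/

lemma kappa0_pos {p : ℝ} (hp : 1 < p) : 0 < kappa0 p := by
  have : 0 < p - 1 := by linarith
  unfold kappa0; positivity

lemma abs_kappa1star_le {p : ℝ} (hp : 1 < p) {d ν y : ℝ} (hd : d ∈ Set.Ioo (-1 : ℝ) 1)
    (hν : |ν| ≤ (1 - |d|) / 2) (hy : y ∈ Set.Ioo (-1 : ℝ) 1) :
    |kappa1star p d ν y| ≤
      kappa0 p * 2 ^ (2 * (1 / (p - 1))) * (1 - y ^ 2) ^ (-(1 / (p - 1))) := by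
  have hb : 0 < 1 / (p - 1) := by
    have : 0 < p - 1 := by linarith
    positivity
  have e2 : (2 : ℝ) / (p - 1) = 2 * (1 / (p - 1)) := by ring
  unfold kappa1star
  rw [e2]
  set b := 1 / (p - 1)
  have hk := kappa0_pos hp
  have hD := one_sub_sq_pos hd
  have hY := one_sub_sq_pos hy
  have hdy := one_add_mul_pos hd hy
  have h1 : (1 + d * y) / 2 ≤ 1 + d * y + ν := by
    have : |d * y| ≤ |d| := by
      rw [abs_mul]
      exact mul_le_of_le_one_right (abs_nonneg _) (abs_le.2 ⟨hy.1.le, hy.2.le⟩)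
    have := (abs_le.1 this).1
    have := (abs_le.1 hν).1
    linarith
  have h2 : ((1 + d * y) / 2) ^ (2 * b) ≤ (1 + d * y + ν) ^ (2 * b) :=
    Real.rpow_le_rpow (by positivity) h1 (by positivity)
  have h3 : (1 - d ^ 2) ^ b * (1 - y ^ 2) ^ b ≤ (1 + d * y) ^ (2 * b) := by
    rw [← Real.mul_rpow hD.le hY.le, Real.rpow_mul hdy.le, Real.rpow_two]
    exact Real.rpow_le_rpow (by positivity) (by nlinarith [sq_nonneg (d + y)]) hb.le
  have hden : 0 < 1 + d * y + ν := by linarith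
  rw [abs_of_nonneg (by positivity), div_le_iff₀ (by positivity), Real.rpow_neg hY.le]
  have h4 : (1 + d * y) ^ (2 * b) ≤ 2 ^ (2 * b) * (1 + d * y + ν) ^ (2 * b) := by
    rw [Real.div_rpow hdy.le (by norm_num), div_le_iff₀ (by positivity)] at h2
    linarith
  have hYb : 0 < (1 - y ^ 2) ^ b := by positivity
  rw [← div_eq_mul_inv, div_mul_eq_mul_div, le_div_iff₀ hYb]
  calc kappa0 p * (1 - d ^ 2) ^ b * (1 - y ^ 2) ^ b
      = kappa0 p * ((1 - d ^ 2) ^ b * (1 - y ^ 2) ^ b) := by ring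
    _ ≤ kappa0 p * (2 ^ (2 * b) * (1 + d * y + ν) ^ (2 * b)) := by
        exact mul_le_mul_of_nonneg_left (h3.trans h4) hk.le
    _ = _ := by ring

/-- Where `|v| ≥ e^{-as/2}` the logarithm is at least `a s`; elsewhere `|v|^p` is itself
exponentially small in `s`. -/
lemma exists_nonlinearity_bound {p α M₀ a : ℝ} (hp : 1 < p) (hα : 1 < α) (hM₀ : 0 < M₀)
    (ha : 0 < a) {f : ℝ → ℝ}
    (hfb : ∀ u : ℝ, |f u| ≤ M₀ * (1 + |u| ^ p / (Real.log (2 + u ^ 2)) ^ α)) :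
    ∃ C s₀ : ℝ, 0 < C ∧ 0 < s₀ ∧ ∀ s : ℝ, s₀ ≤ s → ∀ v : ℝ,
      Real.exp (-(p * a * s)) * |f (Real.exp (a * s) * v)| ≤ C * s ^ (-α) * (1 + |v| ^ p) := by
  have hev : ∀ᶠ s : ℝ in Filter.atTop, Real.exp (-(p * a / 2) * s) ≤ s ^ (-α) := by
    have := (isLittleO_exp_neg_mul_rpow_atTop (show 0 < p * a / 2 by positivity) (-α)).bound
      zero_lt_one
    filter_upwards [this, Filter.eventually_gt_atTop 0] with s hs hs0
    simpa [abs_of_pos (Real.rpow_pos_of_pos hs0 _)] using hs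
  obtain ⟨s₁, hs₁⟩ := Filter.eventually_atTop.1 hev
  have hlog2 : 0 < Real.log 2 := Real.log_pos (by norm_num)
  refine ⟨M₀ * (1 + a ^ (-α) + (Real.log 2) ^ (-α)), max s₁ 1, by positivity, by positivity,
    fun s hs v => ?_⟩
  have hs0 : 0 < s := lt_of_lt_of_le (by positivity) hs
  have hexp := hs₁ s (le_trans (le_max_left _ _) hs)
  set u := Real.exp (a * s) * v with hu
  have hS : 0 < s ^ (-α) := by positivity
  have hpas : 0 < p * a * s := by positivity
  have hexp1 : Real.exp (-(p * a * s)) ≤ s ^ (-α) :=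
    le_trans (Real.exp_le_exp.2 (by linarith)) hexp
  have hlogu2 : Real.log 2 ≤ Real.log (2 + u ^ 2) :=
    Real.log_le_log (by norm_num) (by nlinarith [sq_nonneg u])
  have hlogu : 0 < Real.log (2 + u ^ 2) := lt_of_lt_of_le hlog2 hlogu2
  have hup : Real.exp (-(p * a * s)) * |u| ^ p = |v| ^ p := by
    rw [hu, abs_mul, abs_of_pos (Real.exp_pos _),
      Real.mul_rpow (Real.exp_pos _).le (abs_nonneg _), ← Real.exp_mul, ← mul_assoc,
      ← Real.exp_add]
    have : -(p * a * s) + a * s * p = 0 := by ring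
    rw [this]; simp
  have hV : 0 ≤ |v| ^ p := by positivity
  have main : |v| ^ p * (Real.log (2 + u ^ 2)) ^ (-α)
      ≤ (a ^ (-α) + (Real.log 2) ^ (-α)) * s ^ (-α) * (1 + |v| ^ p) := by
    have hA : 0 < a ^ (-α) := by positivity
    have hB : 0 < (Real.log 2) ^ (-α) := by positivity
    rcases le_total (Real.exp (-(a * s / 2))) |v| with hv | hv
    · have h1 : a * s ≤ Real.log (2 + u ^ 2) := by
        rw [Real.le_log_iff_exp_le (by positivity)]
        have h2 : Real.exp (a * s / 2) ≤ |u| := by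
          rw [hu, abs_mul, abs_of_pos (Real.exp_pos _)]
          calc Real.exp (a * s / 2) = Real.exp (a * s) * Real.exp (-(a * s / 2)) := by
                rw [← Real.exp_add]; congr 1; ring
            _ ≤ _ := by gcongr
        have h3 : Real.exp (a * s) = Real.exp (a * s / 2) ^ 2 := by
          rw [sq, ← Real.exp_add]; congr 1; ring
        rw [h3, ← sq_abs u]
        nlinarith [Real.exp_pos (a * s / 2)]
      have h2 : (Real.log (2 + u ^ 2)) ^ (-α) ≤ a ^ (-α) * s ^ (-α) := by
        rw [← Real.mul_rpow ha.le hs0.le]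
        exact Real.rpow_le_rpow_of_nonpos (by positivity) h1 (by linarith)
      calc |v| ^ p * (Real.log (2 + u ^ 2)) ^ (-α) ≤ (1 + |v| ^ p) * (a ^ (-α) * s ^ (-α)) := by
            gcongr; linarith
        _ ≤ (1 + |v| ^ p) * ((a ^ (-α) + (Real.log 2) ^ (-α)) * s ^ (-α)) := by
            gcongr; linarith
        _ = _ := by ring
    · have h1 : |v| ^ p ≤ s ^ (-α) := by
        calc |v| ^ p ≤ (Real.exp (-(a * s / 2))) ^ p :=
              Real.rpow_le_rpow (abs_nonneg _) hv (by linarith)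
          _ = Real.exp (-(p * a / 2) * s) := by rw [← Real.exp_mul]; congr 1; ring
          _ ≤ _ := hexp
      have h2 : (Real.log (2 + u ^ 2)) ^ (-α) ≤ (Real.log 2) ^ (-α) :=
        Real.rpow_le_rpow_of_nonpos hlog2 hlogu2 (by linarith)
      calc |v| ^ p * (Real.log (2 + u ^ 2)) ^ (-α) ≤ s ^ (-α) * (Real.log 2) ^ (-α) := by
            gcongr
        _ ≤ (s ^ (-α) * (a ^ (-α) + (Real.log 2) ^ (-α))) * 1 := by
            rw [mul_one]; gcongr; linarith
        _ ≤ (s ^ (-α) * (a ^ (-α) + (Real.log 2) ^ (-α))) * (1 + |v| ^ p) := by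
            gcongr; linarith
        _ = _ := by ring
  calc Real.exp (-(p * a * s)) * |f u|
      ≤ Real.exp (-(p * a * s)) * (M₀ * (1 + |u| ^ p / (Real.log (2 + u ^ 2)) ^ α)) := by
        gcongr; exact hfb u
    _ = M₀ * (Real.exp (-(p * a * s)) +
          (Real.exp (-(p * a * s)) * |u| ^ p) * (Real.log (2 + u ^ 2)) ^ (-α)) := by
        rw [Real.rpow_neg hlogu.le]; ring
    _ ≤ M₀ * (s ^ (-α) * (1 + |v| ^ p) +
          (a ^ (-α) + (Real.log 2) ^ (-α)) * s ^ (-α) * (1 + |v| ^ p)) := by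
        rw [hup]
        gcongr
        exact hexp1.trans (le_mul_of_one_le_right hS.le (by linarith))
    _ = _ := by ring

/-! ### The integral estimate -/

theorem stmt15 (p α M₀ : ℝ) (hp : 1 < p) (hα : 1 < α) (hM₀ : 0 < M₀)
    (k : ℕ) (hk : 1 ≤ k) (f : ℝ → ℝ) (hf : Continuous f)
    (hfb : ∀ u : ℝ, |f u| ≤ M₀ * (1 + |u| ^ p / (Real.log (2 + u ^ 2)) ^ α)) :
    ∃ C s₀ : ℝ, 0 < C ∧ 0 < s₀ ∧
      ∀ s : ℝ, s₀ ≤ s → ∀ dstar ∈ Set.Ioo (-1 : ℝ) 1,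
      ∀ d ν : Fin k → ℝ,
        (∀ j : Fin k, d j ∈ Set.Ioo (-1 : ℝ) 1 ∧ |ν j| ≤ (1 - |d j|) / 2) →
      ∀ h : ℝ → ℝ,
        (∀ y ∈ Set.Ioo (-1 : ℝ) 1, DifferentiableAt ℝ h y) →
        (∫⁻ y in Set.Ioo (-1 : ℝ) 1,
            ENNReal.ofReal ((h y ^ 2 + (deriv h y) ^ 2 * (1 - y ^ 2)) * rho p y)) ≤ 1 →
        (∫⁻ y in Set.Ioo (-1 : ℝ) 1,
            ENNReal.ofReal (Real.exp (-2 * p * s / (p - 1))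
              * |f (Real.exp (2 * s / (p - 1))
                  * ((∑ j : Fin k, (-1 : ℝ) ^ ((j : ℕ) + 1)
                        * kappa1star p (d j) (ν j) y) + h y))|
              * solKappa p dstar y * rho p y))
        ≤ ENNReal.ofReal (C * s ^ (-α)) := by
  have hp1 : 0 < p - 1 := by linarith
  obtain ⟨b, hbdef⟩ : ∃ b : ℝ, b = 1 / (p - 1) := ⟨_, rfl⟩
  have hb : 0 < b := by rw [hbdef]; positivity
  have e2 : (2 : ℝ) / (p - 1) = 2 * b := by rw [hbdef]; ring
  obtain ⟨C₁, hC₁, hsup⟩ := exists_sup_bound hb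
  obtain ⟨C₂, s₀, hC₂, hs₀, hnl⟩ := exists_nonlinearity_bound hp hα hM₀
    (show 0 < 2 * b by positivity) hfb
  have hk0 := kappa0_pos hp
  set A : ℝ := k * (kappa0 p * 2 ^ (2 * b)) + C₁ with hA
  have hApos : 0 < A := by positivity
  obtain ⟨I, hI⟩ : ∃ I : ENNReal,
      I = ∫⁻ y in Set.Ioo (-1 : ℝ) 1, ENNReal.ofReal ((1 - y ^ 2) ^ (b - 1)) := ⟨_, rfl⟩
  have hItop : I ≠ ⊤ := by rw [hI]; exact (lintegral_weight_lt_top hb).ne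
  set B : ℝ := C₂ * (1 + A ^ p) * kappa0 p with hB
  have hBpos : 0 < B := by positivity
  refine ⟨B * (I.toReal + 1), s₀, by positivity, hs₀,
    fun s hs dstar hds d ν hdν h hd hE => ?_⟩
  have hs0 : 0 < s := lt_of_lt_of_le hs₀ hs
  have hS : 0 < s ^ (-α) := by positivity
  simp only [rho, e2] at hE
  have hh := hsup h hd hE
  have hpt : ∀ y ∈ Set.Ioo (-1 : ℝ) 1,
      Real.exp (-2 * p * s / (p - 1))
              * |f (Real.exp (2 * s / (p - 1))
                  * ((∑ j : Fin k, (-1 : ℝ) ^ ((j : ℕ) + 1)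
                        * kappa1star p (d j) (ν j) y) + h y))|
              * solKappa p dstar y * rho p y
      ≤ (B * s ^ (-α)) * ((1 - dstar ^ 2) ^ b * (1 - y ^ 2) ^ (b - 1)
          / (1 + dstar * y) ^ (2 * b)) := by
    intro y hy
    have hY := one_sub_sq_pos hy
    have hY1 : 1 - y ^ 2 ≤ 1 := by nlinarith [sq_nonneg y]
    have hD := one_sub_sq_pos hds
    have hdy := one_add_mul_pos hds hy
    set v : ℝ := (∑ j : Fin k, (-1 : ℝ) ^ ((j : ℕ) + 1)
                        * kappa1star p (d j) (ν j) y) + h y with hv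
    have hvb : |v| ≤ A * (1 - y ^ 2) ^ (-b) := by
      have h1 : |∑ j : Fin k, (-1 : ℝ) ^ ((j : ℕ) + 1) * kappa1star p (d j) (ν j) y|
          ≤ k * (kappa0 p * 2 ^ (2 * b) * (1 - y ^ 2) ^ (-b)) := by
        refine (Finset.abs_sum_le_sum_abs _ _).trans ?_
        refine (Finset.sum_le_card_nsmul _ _ (kappa0 p * 2 ^ (2 * b) * (1 - y ^ 2) ^ (-b))
          fun j _ => ?_).trans (by simp)
        rw [abs_mul, abs_pow, abs_neg, abs_one, one_pow, one_mul, hbdef]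
        exact abs_kappa1star_le hp (hdν j).1 (hdν j).2 hy
      calc |v| ≤ _ := abs_add_le _ _
        _ ≤ k * (kappa0 p * 2 ^ (2 * b) * (1 - y ^ 2) ^ (-b)) + C₁ * (1 - y ^ 2) ^ (-b) :=
            add_le_add h1 (hh y hy)
        _ = _ := by rw [hA]; ring
    have hW1 : 1 ≤ (1 - y ^ 2) ^ (-(b * p)) :=
      Real.one_le_rpow_of_pos_of_le_one_of_nonpos hY hY1 (by
        have : 0 < b * p := by positivity
        linarith)
    have hvp : 1 + |v| ^ p ≤ (1 + A ^ p) * (1 - y ^ 2) ^ (-(b * p)) := by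
      have : |v| ^ p ≤ A ^ p * (1 - y ^ 2) ^ (-(b * p)) := by
        refine (Real.rpow_le_rpow (abs_nonneg _) hvb (by linarith)).trans (le_of_eq ?_)
        rw [Real.mul_rpow hApos.le (by positivity), ← Real.rpow_mul hY.le, neg_mul]
      linarith
    have hn := hnl s hs v
    have ea : -2 * p * s / (p - 1) = -(p * (2 * b) * s) := by rw [hbdef]; ring
    have eb : 2 * s / (p - 1) = 2 * b * s := by rw [hbdef]; ring
    rw [ea, eb]
    -- `b (p - 1) = 1` turns the weight `(1 - y²)^{2b - bp}` into `(1 - y²)^{b - 1}`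
    have hexpo : (1 - y ^ 2) ^ (b - 1) = (1 - y ^ 2) ^ (-(b * p)) * (1 - y ^ 2) ^ (2 * b) := by
      rw [← Real.rpow_add hY]
      congr 1
      rw [hbdef]; field_simp; ring
    have hsol : solKappa p dstar y * rho p y
        = kappa0 p * (1 - dstar ^ 2) ^ b * (1 - y ^ 2) ^ (2 * b) / (1 + dstar * y) ^ (2 * b) := by
      unfold solKappa rho
      rw [e2, ← hbdef]; ring
    rw [mul_assoc, hsol]
    calc _ ≤ (C₂ * s ^ (-α) * ((1 + A ^ p) * (1 - y ^ 2) ^ (-(b * p)))) *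
          (kappa0 p * (1 - dstar ^ 2) ^ b * (1 - y ^ 2) ^ (2 * b)
            / (1 + dstar * y) ^ (2 * b)) := by
          refine mul_le_mul_of_nonneg_right (hn.trans ?_) (by positivity)
          exact mul_le_mul_of_nonneg_left hvp (by positivity)
      _ = _ := by rw [hexpo, hB]; ring
  calc _ ≤ ∫⁻ y in Set.Ioo (-1 : ℝ) 1, ENNReal.ofReal (B * s ^ (-α)) *
          ENNReal.ofReal ((1 - dstar ^ 2) ^ b * (1 - y ^ 2) ^ (b - 1)
          / (1 + dstar * y) ^ (2 * b)) := by
        refine setLIntegral_mono' measurableSet_Ioo fun y hy => ?_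
        rw [← ENNReal.ofReal_mul (by positivity)]
        exact ENNReal.ofReal_le_ofReal (hpt y hy)
    _ ≤ ENNReal.ofReal (B * s ^ (-α)) * I := by
        rw [lintegral_const_mul' _ _ ENNReal.ofReal_ne_top, hI]
        exact mul_le_mul_right (lintegral_boost_le b hds) _
    _ = ENNReal.ofReal (B * s ^ (-α) * I.toReal) := by
        rw [ENNReal.ofReal_mul (p := B * s ^ (-α)) (by positivity), ENNReal.ofReal_toReal hItop]
    _ ≤ _ := by
        apply ENNReal.ofReal_le_ofReal
        have : 0 < B * s ^ (-α) := by positivity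
        nlinarith
end

section
/- (Grönwall-type lemma with polynomial forcing) Let a > 0 and α > 0. There exists a constant C' = C'(a, α) > 0 such that for every s₀ ≥ 1, every C₀ ≥ 0, and every differentiable function E : [s₀, ∞) → ℝ satisfying E'(s) + a E(s) ≤ C₀ s^{−α} for all s ≥ s₀, one has E(s) ≤ E(s₀) e^{−a(s−s₀)} + C' C₀ s^{−α} for all s ≥ s₀. -/
/-!
With `T = 2α/a` and `K = (2/a)(1+T)^α`, the function `φ(s) = K (s+T)^(-α)` is a nonnegative
supersolution: `φ' + aφ ≥ s^(-α)` for `s ≥ 1`. The shift by `T` makes `α/(s+T) ≤ a/2`, so that `φ'`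
absorbs at most half of `aφ`, and `s + T ≤ (1+T)s` compares `(s+T)^(-α)` with `s^(-α)`. Hence
`exp(a s) (E(s) - C₀ φ(s))` is nonincreasing on `[s₀, ∞)`, and since `0 ≤ φ(s) ≤ K s^(-α)` the
bound holds with `C' = K`.
-/

theorem stmt18 (a α : ℝ) (ha : 0 < a) (hα : 0 < α) :
    ∃ C' : ℝ, 0 < C' ∧ ∀ s₀ : ℝ, 1 ≤ s₀ → ∀ C₀ : ℝ, 0 ≤ C₀ → ∀ E : ℝ → ℝ,
      (∀ s : ℝ, s₀ ≤ s → DifferentiableAt ℝ E s) →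
      (∀ s : ℝ, s₀ ≤ s → deriv E s + a * E s ≤ C₀ * s ^ (-α)) →
      ∀ s : ℝ, s₀ ≤ s →
        E s ≤ E s₀ * Real.exp (-a * (s - s₀)) + C' * C₀ * s ^ (-α) := by
  obtain ⟨T, hT⟩ : ∃ T, T = 2 * α / a := ⟨_, rfl⟩
  have hT0 : 0 < T := by rw [hT]; positivity
  have haT : a * T = 2 * α := by rw [hT]; field_simp
  obtain ⟨K, hK⟩ : ∃ K, K = 2 / a * (1 + T) ^ α := ⟨_, rfl⟩
  have hK0 : 0 < K := by rw [hK]; positivity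
  refine ⟨K, hK0, fun s₀ hs₀ C₀ hC₀ E hE hineq s hs => ?_⟩
  have hφ : ∀ x : ℝ, 1 ≤ x → HasDerivAt (fun x : ℝ => K * (x + T) ^ (-α))
      (K * (-α * (x + T) ^ (-α - 1))) x := by
    intro x hx
    have h1 : HasDerivAt (fun x : ℝ => x + T) 1 x := (hasDerivAt_id x).add_const T
    have h2 := (h1.rpow_const (p := -α) (Or.inl (by linarith))).const_mul K
    exact h2.congr_deriv (by ring)
  have hsuper : ∀ x : ℝ, 1 ≤ x →
      x ^ (-α) ≤ K * (-α * (x + T) ^ (-α - 1)) + a * (K * (x + T) ^ (-α)) := by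
    intro x hx
    have hxT : 0 < x + T := by linarith
    have h1 : (x + T) ^ (-α - 1) = (x + T) ^ (-α) / (x + T) := Real.rpow_sub_one hxT.ne' _
    have h2 : ((1 + T) * x) ^ (-α) ≤ (x + T) ^ (-α) :=
      Real.rpow_le_rpow_of_nonpos hxT (by nlinarith) (by linarith)
    rw [Real.mul_rpow (by linarith) (by linarith), Real.rpow_neg (by linarith : 0 ≤ 1 + T)] at h2
    have hp : 0 < (1 + T) ^ α := by positivity
    have h3 : x ^ (-α) ≤ (1 + T) ^ α * (x + T) ^ (-α) := by
      rwa [inv_mul_le_iff₀ hp] at h2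
    have h4 : α / (x + T) ≤ a / 2 := by
      rw [div_le_iff₀ hxT]; nlinarith
    have h5 : K * (a / 2) = (1 + T) ^ α := by rw [hK]; field_simp
    have hq : 0 < K * (x + T) ^ (-α) := by positivity
    calc x ^ (-α) ≤ K * (x + T) ^ (-α) * (a / 2) := by rw [← h5] at h3; linarith
      _ ≤ K * (x + T) ^ (-α) * (a - α / (x + T)) :=
          mul_le_mul_of_nonneg_left (by linarith) hq.le
      _ = _ := by rw [h1]; ring
  have hG : ∀ x : ℝ, s₀ ≤ x →
      HasDerivAt (fun x => Real.exp (a * x) * (E x - C₀ * (K * (x + T) ^ (-α))))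
        (Real.exp (a * x) * ((deriv E x + a * E x)
          - C₀ * (K * (-α * (x + T) ^ (-α - 1)) + a * (K * (x + T) ^ (-α))))) x := by
    intro x hx
    have h1 : HasDerivAt (fun x : ℝ => Real.exp (a * x)) (Real.exp (a * x) * (a * 1)) x :=
      ((hasDerivAt_id x).const_mul a).exp
    have h2 := h1.mul ((hE x hx).hasDerivAt.sub ((hφ x (hs₀.trans hx)).const_mul C₀))
    exact h2.congr_deriv (by simp only [Pi.sub_apply]; ring)
  have hanti : AntitoneOn (fun x => Real.exp (a * x) * (E x - C₀ * (K * (x + T) ^ (-α))))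
      (Set.Ici s₀) := by
    refine antitoneOn_of_deriv_nonpos (convex_Ici s₀)
      (fun x hx => (hG x hx).continuousAt.continuousWithinAt)
      (fun x hx => (hG x (interior_subset hx)).differentiableAt.differentiableWithinAt) ?_
    intro x hx
    have hx' : s₀ ≤ x := interior_subset hx
    rw [(hG x hx').deriv]
    have := mul_le_mul_of_nonneg_left (hsuper x (hs₀.trans hx')) hC₀
    exact mul_nonpos_of_nonneg_of_nonpos (Real.exp_pos _).le (by linarith [hineq x hx'])
  have h := hanti (Set.mem_Ici.2 le_rfl) (Set.mem_Ici.2 hs) hs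
  simp only at h
  have hexp : Real.exp (a * s₀) = Real.exp (a * s) * Real.exp (-a * (s - s₀)) := by
    rw [← Real.exp_add]; ring_nf
  rw [hexp, mul_assoc] at h
  have h' := le_of_mul_le_mul_left h (Real.exp_pos _)
  have h0 : 0 ≤ Real.exp (-a * (s - s₀)) * (C₀ * (K * (s₀ + T) ^ (-α))) := by positivity
  have hle : (s + T) ^ (-α) ≤ s ^ (-α) :=
    Real.rpow_le_rpow_of_nonpos (by linarith) (by linarith) (by linarith)
  have h1 := mul_le_mul_of_nonneg_left hle (mul_nonneg hK0.le hC₀)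
  linarith
end
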